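/- Let m ≥ 1 and c ≥ 0 be integers and let n ≥ 1 be an integer with m + c ≥ n − 1. Then the underlying undirected graph of the finite linear Jaco graph J_n(f) with incidence function f(x) = m·x + c is the complete graph K_n. -/

import Mathlib

/-- In-degree of vertex `v_j` in the (root) Jaco graph with incidence function `f`:
`d⁻(v_j) = |{ i : 1 ≤ i < j, i + f i − d⁻(v_i) ≥ j }|`. -/
noncomputable def jacoIn (f : ℕ → ℕ) (j : ℕ) : ℕ :=
  Nat.strongRecOn j (fun j ih =>
    (((Finset.Ico 1 j).attach).filter (fun i : {x // x ∈ Finset.Ico 1 j} =>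
      j ≤ i.1 + f i.1 - ih i.1 (Finset.mem_Ico.mp i.2).2)).card)

/-- The arc `(v_i, v_j)` is present in the Jaco graph iff `1 ≤ i < j` and
`i + f i − d⁻(v_i) ≥ j`. -/
def jacoArc (f : ℕ → ℕ) (i j : ℕ) : Prop :=
  1 ≤ i ∧ i < j ∧ j ≤ i + f i - jacoIn f i

noncomputable instance (f : ℕ → ℕ) (i j : ℕ) : Decidable (jacoArc f i j) := by
  unfold jacoArc; infer_instance

/-- The underlying undirected simple graph `J*_n(f)` of the finite Jaco graph `J_n(f)`,
on vertex set `{v_1, …, v_n}` (vertex `x : Fin n` represents `v_{x+1}`). -/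
def jacoGraph (f : ℕ → ℕ) (n : ℕ) : SimpleGraph (Fin n) :=
  SimpleGraph.fromRel (fun x y => jacoArc f (x.1 + 1) (y.1 + 1))

noncomputable instance (f : ℕ → ℕ) (n : ℕ) : DecidableRel (jacoGraph f n).Adj := fun x y =>
  decidable_of_iff
    (x ≠ y ∧ (jacoArc f (x.1 + 1) (y.1 + 1) ∨ jacoArc f (y.1 + 1) (x.1 + 1)))
    (by unfold jacoGraph; exact (SimpleGraph.fromRel_adj (fun a b : Fin n => jacoArc f (a.1 + 1) (b.1 + 1)) x y).symm)

/-- The in-degree of `v_j` is at most `j - 1`. -/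
theorem jacoIn_le (f : ℕ → ℕ) (j : ℕ) : jacoIn f j ≤ j - 1 := by
  unfold jacoIn
  rw [Nat.strongRecOn_eq]
  refine (Finset.card_filter_le _ _).trans ?_
  simp

/-- If `m ≥ 1`, `c ≥ 0` and `m + c ≥ n − 1` (and `n ≥ 1`), the underlying
graph of the finite linear Jaco graph `J_n(f)` with `f(x) = m·x + c` is the complete
graph `K_n`. -/
theorem linear_jaco_graph_complete (m c n : ℕ) (hm : 1 ≤ m) (hn : 1 ≤ n)
    (h : n - 1 ≤ m + c) :
    jacoGraph (fun x => m * x + c) n = (⊤ : SimpleGraph (Fin n)) := by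
  have key : ∀ i j : ℕ, i < j → j < n → jacoArc (fun x => m * x + c) (i + 1) (j + 1) := by
    intro i j hij hj
    have h1 := jacoIn_le (fun x => m * x + c) (i + 1)
    have h2 : m * 1 ≤ m * (i + 1) := Nat.mul_le_mul_left m (by omega)
    refine ⟨by omega, by omega, ?_⟩
    change j + 1 ≤ i + 1 + (m * (i + 1) + c) - _
    omega
  ext x y
  unfold jacoGraph
  rw [SimpleGraph.fromRel_adj, SimpleGraph.top_adj]
  refine ⟨fun hxy => hxy.1, fun hxy => ⟨hxy, ?_⟩⟩
  rcases lt_or_gt_of_ne (Fin.val_ne_of_ne hxy) with hlt | hlt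
  · exact Or.inl (key _ _ hlt y.2)
  · exact Or.inr (key _ _ hlt x.2)
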